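/- Let $u$ solve the free wave equation on $\mathbb{R}^{3+1}$ with smooth initial data $(u_0, u_1)$ where $u_0, u_1$ and their derivatives decay at infinity. If $-\Delta u_0(x) > |\nabla u_1(x)|$ for all $x$, then $u(x,t) > 0$ for all $(x,t) \in \mathbb{R}^{3+1}$. -/

import Mathlib

open Filter

/-- The Laplacian on ℝ³ as a sum of second directional derivatives. -/
noncomputable def lap3 (f : EuclideanSpace ℝ (Fin 3) → ℝ) (x : EuclideanSpace ℝ (Fin 3)) : ℝ :=
  ∑ i : Fin 3,
    iteratedDeriv 2 (fun s : ℝ => f (x + s • (EuclideanSpace.single i (1:ℝ)))) 0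

/-!
Kirchhoff's formula writes `4π u(x, t)` as the integral over the unit sphere of
`u₀ + r ∂ᵣu₀ + t u₁`, evaluated at `x + rω` with `r = t`; by the antipodal symmetry of the sphere
`r = |t|` gives the same value. Now decouple the radius `r` from the time `t`. By the
Euler–Poisson–Darboux identity the `r`-derivative of the integral is the integral of
`r Δu₀ + t ∂ᵣu₁`, which is negative for `r > |t|` because `|∂ᵣu₁| ≤ |∇u₁| < -Δu₀`. So the integral
strictly decreases on `[|t|, ∞)`. It cannot stay below a negative constant for large `r`: the mean
of `u₁` tends to zero, and `u₀ + r ∂ᵣu₀` contributes the derivative of `r` times the mean of `u₀`,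
which is `o(r)`. Hence it is positive at `r = |t|`.
-/

section

open Real Set Topology MeasureTheory

local notation "E" => EuclideanSpace ℝ (Fin 3)

section DerivativesAlongCurves

variable {V W F : Type*} [NormedAddCommGroup V] [NormedSpace ℝ V] [NormedAddCommGroup W]
  [NormedSpace ℝ W] [NormedAddCommGroup F] [NormedSpace ℝ F]

lemma hasDerivAt_add_smul (x v : V) (s : ℝ) : HasDerivAt (fun s : ℝ => x + s • v) v s := by
  simpa using ((hasDerivAt_id s).smul_const v).const_add x

lemma hasDerivAt_comp_add_smul {f : V → F} (hf : Differentiable ℝ f) (x v : V) (s : ℝ) :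
    HasDerivAt (fun s : ℝ => f (x + s • v)) (fderiv ℝ f (x + s • v) v) s :=
  (hf _).hasFDerivAt.comp_hasDerivAt s (hasDerivAt_add_smul x v s)

lemma continuous_fderiv_fderiv {f : V → F} (hf : ContDiff ℝ 2 f) :
    Continuous (fderiv ℝ (fderiv ℝ f)) :=
  (hf.fderiv_right (m := 1) le_rfl).continuous_fderiv one_ne_zero

lemma hasFDerivAt_fderiv {f : V → F} (hf : ContDiff ℝ 2 f) (x : V) :
    HasFDerivAt (fderiv ℝ f) (fderiv ℝ (fderiv ℝ f) x) x :=
  ((hf.fderiv_right (m := 1) le_rfl).differentiable one_ne_zero x).hasFDerivAt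

lemma hasDerivAt_fderiv_apply {f : V → F} (hf : ContDiff ℝ 2 f) {γ w : ℝ → V} {γ' w' : V} {s : ℝ}
    (hγ : HasDerivAt γ γ' s) (hw : HasDerivAt w w' s) :
    HasDerivAt (fun s => fderiv ℝ f (γ s) (w s))
      (fderiv ℝ (fderiv ℝ f) (γ s) γ' (w s) + fderiv ℝ f (γ s) w') s :=
  ((hasFDerivAt_fderiv hf (γ s)).comp_hasDerivAt s hγ).clm_apply hw

lemma iteratedDeriv_two_add_smul {f : V → F} (hf : ContDiff ℝ 2 f) (x v : V) (s : ℝ) :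
    iteratedDeriv 2 (fun s : ℝ => f (x + s • v)) s =
      fderiv ℝ (fderiv ℝ f) (x + s • v) v v := by
  have hderiv : deriv (fun s : ℝ => f (x + s • v)) = fun s => fderiv ℝ f (x + s • v) v :=
    funext fun s => (hasDerivAt_comp_add_smul (hf.differentiable two_ne_zero) x v s).deriv
  rw [iteratedDeriv_succ, iteratedDeriv_one, hderiv,
    (hasDerivAt_fderiv_apply hf (hasDerivAt_add_smul x v s) (hasDerivAt_const s v)).deriv,
    map_zero, add_zero]

lemma fderiv_slice {f : V × W → F} (hf : Differentiable ℝ f) (x : V) (y : W) :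
    fderiv ℝ (fun y => f (x, y)) y = (fderiv ℝ f (x, y)).comp (.inr ℝ V W) :=
  ((hf (x, y)).hasFDerivAt.comp y (hasFDerivAt_prodMk_right x y)).fderiv

lemma fderiv_fderiv_slice {f : V × W → F} (hf : ContDiff ℝ 2 f) (x : V) (y v w : W) :
    fderiv ℝ (fderiv ℝ fun y => f (x, y)) y v w =
      fderiv ℝ (fderiv ℝ f) (x, y) (0, v) (0, w) := by
  have hrestrict : HasFDerivAt (fun y => (fderiv ℝ f (x, y)).comp (.inr ℝ V W)) _ y :=
    ((hasFDerivAt_fderiv hf (x, y)).comp y (hasFDerivAt_prodMk_right x y)).clm_comp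
      (hasFDerivAt_const (ContinuousLinearMap.inr ℝ V W) y)
  rw [funext (fderiv_slice (hf.differentiable two_ne_zero) x), hrestrict.fderiv]
  simp

lemma deriv_slice {f : ℝ × W → F} (hf : Differentiable ℝ f) (s : ℝ) (y : W) :
    deriv (fun s => f (s, y)) s = fderiv ℝ f (s, y) (1, 0) :=
  ((hf (s, y)).hasFDerivAt.comp_hasDerivAt s
    ((hasDerivAt_id s).prodMk (hasDerivAt_const s y))).deriv

lemma iteratedDeriv_two_slice {f : ℝ × W → F} (hf : ContDiff ℝ 2 f) (s : ℝ) (y : W) :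
    iteratedDeriv 2 (fun s => f (s, y)) s = fderiv ℝ (fderiv ℝ f) (s, y) (1, 0) (1, 0) := by
  simpa using iteratedDeriv_two_add_smul hf (0, y) (1, 0) s

lemma hasDerivAt_along_light_cone {f : ℝ × W → F} (hf : ContDiff ℝ 2 f) (x ω : W) (t s : ℝ) :
    HasDerivAt
      (fun s => f (s, x + (t - s) • ω) + (t - s) • fderiv ℝ f (s, x + (t - s) • ω) (1, ω))
      ((t - s) • (fderiv ℝ (fderiv ℝ f) (s, x + (t - s) • ω) (1, 0) (1, 0) -
          fderiv ℝ (fderiv ℝ f) (s, x + (t - s) • ω) (0, ω) (0, ω)) -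
        (2 : ℝ) • fderiv ℝ f (s, x + (t - s) • ω) (0, ω)) s := by
  have hsub : HasDerivAt (fun s => t - s) (-1) s := (hasDerivAt_id' s).const_sub t
  have hγ : HasDerivAt (fun s => (s, x + (t - s) • ω)) ((1, 0) - (0, ω)) s := by
    simpa using (hasDerivAt_id' s).prodMk ((hsub.smul_const ω).const_add x)
  have hsymm : IsSymmSndFDerivAt ℝ f (s, x + (t - s) • ω) :=
    hf.contDiffAt.isSymmSndFDerivAt (by simp)
  have hsplit : ((1, ω) : ℝ × W) = (1, 0) + (0, ω) := by simp
  refine (((hf.differentiable two_ne_zero _).hasFDerivAt.comp_hasDerivAt s hγ).add (hsub.smul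
    (hasDerivAt_fderiv_apply hf hγ (hasDerivAt_const s (1, ω))))).congr_deriv ?_
  simp only [hsplit, map_add, map_sub, sub_apply, map_zero, hsymm.eq (0, ω) (1, 0)]
  module

end DerivativesAlongCurves

section Laplacian

lemma lap3_eq_sum_fderiv_fderiv {f : E → ℝ} (hf : ContDiff ℝ 2 f) (x : E) :
    lap3 f x = ∑ i, fderiv ℝ (fderiv ℝ f) x (.single i 1) (.single i 1) := by
  simp [lap3, iteratedDeriv_two_add_smul hf]

lemma continuous_lap3 {f : E → ℝ} (hf : ContDiff ℝ 2 f) : Continuous (lap3 f) := by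
  have := continuous_fderiv_fderiv hf
  rw [funext (lap3_eq_sum_fderiv_fderiv hf)]
  fun_prop

end Laplacian

lemma hasDerivAt_intervalIntegral_of_continuous {F : Type*} [NormedAddCommGroup F]
    [NormedSpace ℝ F] {f f' : ℝ → ℝ → F} (hf : Continuous fun p : ℝ × ℝ => f p.1 p.2)
    (hf' : Continuous fun p : ℝ × ℝ => f' p.1 p.2)
    (hderiv : ∀ s y, HasDerivAt (fun s => f s y) (f' s y) s) (a b s : ℝ) :
    HasDerivAt (fun s => ∫ y in a..b, f s y) (∫ y in a..b, f' s y) s := by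
  obtain ⟨C, hC⟩ := ((isCompact_Icc (a := s - 1) (b := s + 1)).prod
    (isCompact_uIcc (a := a) (b := b))).exists_bound_of_continuousOn hf'.continuousOn
  exact (intervalIntegral.hasDerivAt_integral_of_dominated_loc_of_deriv_le
    (bound := fun _ => C) (Icc_mem_nhds (sub_one_lt s) (lt_add_one s))
    (.of_forall fun s => (Continuous.uncurry_left s hf).aestronglyMeasurable)
    ((Continuous.uncurry_left s hf).intervalIntegrable _ _)
    (Continuous.uncurry_left s hf').aestronglyMeasurable
    (.of_forall fun y hy r hr => hC (r, y) ⟨hr, uIoc_subset_uIcc hy⟩)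
    (continuous_const.intervalIntegrable _ _)
    (.of_forall fun y _ r _ => hderiv r y)).2

lemma frequently_lt_add_mul_deriv {M M' : ℝ → ℝ} (hM : ∀ r, HasDerivAt M (M' r) r)
    (hM0 : Tendsto M atTop (𝓝 0)) {c : ℝ} (hc : c < 0) :
    ∃ᶠ r in atTop, c < M r + r * M' r := by
  -- Otherwise `r * M r`, whose derivative this is, decreases at least linearly, so `M r` cannot
  -- tend to zero.
  intro hle
  obtain ⟨R, hR⟩ := eventually_atTop.1 hle
  have hN (r : ℝ) : HasDerivAt (fun r => r * M r) (M r + r * M' r) r := by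
    simpa using (hasDerivAt_id' r).fun_mul (hM r)
  have hlin (r : ℝ) (hr : R ≤ r) : r * M r - R * M R ≤ c * (r - R) :=
    (convex_Ici R).image_sub_le_mul_sub_of_deriv_le
      (fun r _ => (hN r).continuousAt.continuousWithinAt)
      (fun r _ => (hN r).differentiableAt.differentiableWithinAt)
      (fun r hr => by simpa [(hN r).deriv] using hR r (interior_subset hr))
      R self_mem_Ici r hr hr
  have hbound : ∀ᶠ r in atTop, M r ≤ c + (R * M R - c * R) / r := by
    filter_upwards [eventually_ge_atTop R, eventually_gt_atTop 0] with r hRr hr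
    rw [← sub_le_iff_le_add', le_div_iff₀ hr]
    linarith [hlin r hRr]
  have hlim : Tendsto (fun r => c + (R * M R - c * R) / r) atTop (𝓝 (c + 0)) :=
    (tendsto_id.const_div_atTop _).const_add c
  linarith [le_of_tendsto_of_tendsto hM0 hlim hbound]

section SphericalCoordinates

lemma hasDerivAt_toLp_three {a b c : ℝ → ℝ} {a' b' c' s : ℝ} (ha : HasDerivAt a a' s)
    (hb : HasDerivAt b b' s) (hc : HasDerivAt c c' s) :
    HasDerivAt (fun s => (!₂[a s, b s, c s] : E)) !₂[a', b', c'] s := by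
  refine (PiLp.continuousLinearEquiv 2 ℝ fun _ : Fin 3 => ℝ).symm.hasFDerivAt.comp_hasDerivAt s
    (f := fun s => ![a s, b s, c s]) (f' := ![a', b', c']) (hasDerivAt_pi.2 fun i => ?_)
  fin_cases i
  exacts [ha, hb, hc]

/-- The point of the unit sphere of ℝ³ with polar angle `φ` and azimuth `θ`. -/
noncomputable def spherePoint (φ θ : ℝ) : E := !₂[sin φ * cos θ, sin φ * sin θ, cos φ]

/-- The unit tangent vector to the meridians at `spherePoint φ θ`. -/
noncomputable def meridianTangent (φ θ : ℝ) : E := !₂[cos φ * cos θ, cos φ * sin θ, -sin φ]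

/-- The unit tangent vector to the circles of latitude at the points of azimuth `θ`. -/
noncomputable def latitudeTangent (θ : ℝ) : E := !₂[-sin θ, cos θ, 0]

@[fun_prop]
lemma continuous_spherePoint : Continuous fun p : ℝ × ℝ => spherePoint p.1 p.2 := by
  unfold spherePoint
  fun_prop

@[fun_prop]
lemma continuous_meridianTangent : Continuous fun p : ℝ × ℝ => meridianTangent p.1 p.2 := by
  unfold meridianTangent
  fun_prop

@[fun_prop]
lemma continuous_latitudeTangent : Continuous latitudeTangent := by
  unfold latitudeTangent
  fun_prop

lemma norm_spherePoint (φ θ : ℝ) : ‖spherePoint φ θ‖ = 1 := by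
  rw [EuclideanSpace.norm_eq, Real.sqrt_eq_one]
  simp only [spherePoint, Fin.sum_univ_three, Real.norm_eq_abs, sq_abs, PiLp.toLp_apply,
    Matrix.cons_val]
  linear_combination sin φ ^ 2 * sin_sq_add_cos_sq θ + sin_sq_add_cos_sq φ

lemma spherePoint_pi_sub_add_pi (φ θ : ℝ) : spherePoint (π - φ) (θ + π) = -spherePoint φ θ := by
  ext i
  fin_cases i <;> simp [spherePoint]

lemma hasDerivAt_spherePoint_left (φ θ : ℝ) :
    HasDerivAt (fun φ => spherePoint φ θ) (meridianTangent φ θ) φ :=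
  hasDerivAt_toLp_three ((hasDerivAt_sin φ).mul_const _) ((hasDerivAt_sin φ).mul_const _)
    (hasDerivAt_cos φ)

lemma hasDerivAt_meridianTangent_left (φ θ : ℝ) :
    HasDerivAt (fun φ => meridianTangent φ θ) (-spherePoint φ θ) φ := by
  refine (hasDerivAt_toLp_three ((hasDerivAt_cos φ).mul_const (cos θ))
    ((hasDerivAt_cos φ).mul_const (sin θ)) (hasDerivAt_sin φ).fun_neg).congr_deriv ?_
  ext i
  fin_cases i <;> simp [spherePoint]

lemma hasDerivAt_spherePoint_right (φ θ : ℝ) :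
    HasDerivAt (spherePoint φ) (sin φ • latitudeTangent θ) θ := by
  refine (hasDerivAt_toLp_three ((hasDerivAt_cos θ).const_mul (sin φ))
    ((hasDerivAt_sin θ).const_mul (sin φ)) (hasDerivAt_const θ (cos φ))).congr_deriv ?_
  ext i
  fin_cases i <;> simp [latitudeTangent]

lemma hasDerivAt_latitudeTangent (φ θ : ℝ) :
    HasDerivAt latitudeTangent (-(sin φ • spherePoint φ θ + cos φ • meridianTangent φ θ)) θ := by
  refine (hasDerivAt_toLp_three (hasDerivAt_sin θ).fun_neg (hasDerivAt_cos θ)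
    (hasDerivAt_const θ 0)).congr_deriv ?_
  have hφ := sin_sq_add_cos_sq φ
  ext i
  fin_cases i <;> simp only [spherePoint, meridianTangent, PiLp.neg_apply, PiLp.add_apply,
    PiLp.smul_apply, smul_eq_mul, Fin.zero_eta, Fin.mk_one, Fin.reduceFinMk, Matrix.cons_val]
  · linear_combination cos θ * hφ
  · linear_combination sin θ * hφ
  · ring

lemma bilin_spherePoint_add_tangents (B : E →L[ℝ] E →L[ℝ] ℝ) (φ θ : ℝ) :
    B (spherePoint φ θ) (spherePoint φ θ) + B (meridianTangent φ θ) (meridianTangent φ θ) +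
      B (latitudeTangent θ) (latitudeTangent θ) = ∑ i, B (.single i 1) (.single i 1) := by
  have hcoord (a b c : ℝ) : (!₂[a, b, c] : E) = a • EuclideanSpace.single 0 1 +
      b • EuclideanSpace.single 1 1 + c • EuclideanSpace.single 2 1 := by
    ext i
    fin_cases i <;> simp
  have hφ := sin_sq_add_cos_sq φ
  have hθ := sin_sq_add_cos_sq θ
  simp only [spherePoint, meridianTangent, latitudeTangent, hcoord, map_add, map_smul,
    add_apply, smul_apply, smul_eq_mul, Fin.sum_univ_three]
  set e : Fin 3 → E := fun i => EuclideanSpace.single i 1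
  linear_combination (B (e 0) (e 0) * cos θ ^ 2 + B (e 1) (e 1) * sin θ ^ 2 + B (e 2) (e 2) +
    (B (e 0) (e 1) + B (e 1) (e 0)) * sin θ * cos θ) * hφ + (B (e 0) (e 0) + B (e 1) (e 1)) * hθ

end SphericalCoordinates

section SphereIntegral

/-- The integral of `f` over the unit sphere of ℝ³ for the surface measure, written in spherical
coordinates. -/
noncomputable def sphereIntegral (f : E → ℝ) : ℝ :=
  ∫ φ in (0 : ℝ)..π, ∫ θ in (0 : ℝ)..2 * π, sin φ * f (spherePoint φ θ)

lemma sphereIntegral_const (c : ℝ) : sphereIntegral (fun _ => c) = 4 * π * c := by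
  simp only [sphereIntegral, intervalIntegral.integral_const, intervalIntegral.integral_const_mul,
    smul_eq_mul, intervalIntegral.integral_mul_const, integral_sin, cos_zero, cos_pi]
  ring

lemma sphereIntegral_const_mul (c : ℝ) (f : E → ℝ) :
    sphereIntegral (fun ω => c * f ω) = c * sphereIntegral f := by
  simp only [sphereIntegral, mul_left_comm _ c, intervalIntegral.integral_const_mul]

lemma sphereIntegral_add {f g : E → ℝ} (hf : Continuous f) (hg : Continuous g) :
    sphereIntegral (fun ω => f ω + g ω) = sphereIntegral f + sphereIntegral g := by
  simp only [sphereIntegral, mul_add]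
  rw [← intervalIntegral.integral_add]
  · congr! 2 with φ
    exact intervalIntegral.integral_add
      (Continuous.intervalIntegrable (by fun_prop) _ _)
      (Continuous.intervalIntegrable (by fun_prop) _ _)
  all_goals exact (intervalIntegral.continuous_parametric_intervalIntegral_of_continuous'
    (by fun_prop) _ _).intervalIntegrable _ _

lemma sphereIntegral_pos {f : E → ℝ} (hf : Continuous f) (hpos : ∀ ω, ‖ω‖ = 1 → 0 < f ω) :
    0 < sphereIntegral f :=
  intervalIntegral.intervalIntegral_pos_of_pos_on
    ((intervalIntegral.continuous_parametric_intervalIntegral_of_continuous'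
      (by fun_prop) _ _).intervalIntegrable _ _)
    (fun φ hφ => intervalIntegral.intervalIntegral_pos_of_pos_on
      (Continuous.intervalIntegrable (by fun_prop) _ _)
      (fun θ _ => mul_pos (sin_pos_of_mem_Ioo hφ) (hpos _ (norm_spherePoint φ θ))) two_pi_pos)
    pi_pos

lemma abs_sphereIntegral_lt {f : E → ℝ} {C : ℝ} (hf : Continuous f)
    (hfC : ∀ ω, ‖ω‖ = 1 → |f ω| < C) : |sphereIntegral f| < 4 * π * C := by
  have hpos {g : E → ℝ} (hg : Continuous g) (hgC : ∀ ω, ‖ω‖ = 1 → -C < g ω) :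
      -(4 * π * C) < sphereIntegral g := by
    have hsum := sphereIntegral_pos (f := fun ω => C + g ω) (by fun_prop)
      fun ω hω => by linarith [hgC ω hω]
    rw [sphereIntegral_add continuous_const hg, sphereIntegral_const] at hsum
    linarith
  have hneg : -(4 * π * C) < -sphereIntegral f := by
    rw [neg_eq_neg_one_mul (sphereIntegral f), ← sphereIntegral_const_mul]
    exact hpos (by fun_prop) fun ω hω => by linarith [(abs_lt.1 (hfC ω hω)).2]
  exact abs_lt.2 ⟨hpos hf fun ω hω => (abs_lt.1 (hfC ω hω)).1, neg_lt_neg_iff.1 hneg⟩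

lemma sphereIntegral_comp_neg (f : E → ℝ) :
    sphereIntegral (fun ω => f (-ω)) = sphereIntegral f := by
  have hshift (φ : ℝ) : ∫ θ in (0 : ℝ)..2 * π, sin φ * f (-spherePoint φ θ) =
      ∫ θ in (0 : ℝ)..2 * π, sin (π - φ) * f (spherePoint (π - φ) θ) := by
    have hper : Function.Periodic (fun θ => sin (π - φ) * f (spherePoint (π - φ) θ)) (2 * π) :=
      fun θ => by simp only [spherePoint, cos_add_two_pi, sin_add_two_pi]
    simp_rw [← spherePoint_pi_sub_add_pi, ← sin_pi_sub φ]
    rw [intervalIntegral.integral_comp_add_right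
      (fun θ => sin (π - φ) * f (spherePoint (π - φ) θ)), zero_add, add_comm (2 * π),
      hper.intervalIntegral_add_eq π 0, zero_add]
  simp only [sphereIntegral, hshift]
  simpa using intervalIntegral.integral_comp_sub_left
    (fun φ => ∫ θ in (0 : ℝ)..2 * π, sin φ * f (spherePoint φ θ)) π (a := 0) (b := π)

lemma hasDerivAt_sphereIntegral {f f' : ℝ → E → ℝ} (hf : Continuous fun p : ℝ × E => f p.1 p.2)
    (hf' : Continuous fun p : ℝ × E => f' p.1 p.2)
    (hderiv : ∀ s ω, HasDerivAt (fun s => f s ω) (f' s ω) s) (s : ℝ) :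
    HasDerivAt (fun s => sphereIntegral (f s)) (sphereIntegral (f' s)) s := by
  have hcont {g : ℝ → E → ℝ} (hg : Continuous fun p : ℝ × E => g p.1 p.2) :
      Continuous fun q : (ℝ × ℝ) × ℝ => sin q.1.2 * g q.1.1 (spherePoint q.1.2 q.2) :=
    (by fun_prop : Continuous fun q : (ℝ × ℝ) × ℝ => sin q.1.2).mul
      (hg.comp (by fun_prop : Continuous fun q : (ℝ × ℝ) × ℝ => (q.1.1, spherePoint q.1.2 q.2)))
  have hinner (s φ : ℝ) : HasDerivAt
      (fun s => ∫ θ in (0 : ℝ)..2 * π, sin φ * f s (spherePoint φ θ))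
      (∫ θ in (0 : ℝ)..2 * π, sin φ * f' s (spherePoint φ θ)) s := by
    have hslice : Continuous fun p : ℝ × ℝ => ((p.1, φ), p.2) := by fun_prop
    exact hasDerivAt_intervalIntegral_of_continuous ((hcont hf).comp hslice)
      ((hcont hf').comp hslice) (fun s θ => (hderiv s _).const_mul (sin φ)) _ _ s
  exact hasDerivAt_intervalIntegral_of_continuous
    (intervalIntegral.continuous_parametric_intervalIntegral_of_continuous' (hcont hf) _ _)
    (intervalIntegral.continuous_parametric_intervalIntegral_of_continuous' (hcont hf') _ _)
    hinner _ _ s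

lemma tendsto_sphereIntegral_add_smul {f : E → ℝ} (hf : Continuous f)
    (hf0 : Tendsto f (cocompact E) (𝓝 0)) (x : E) :
    Tendsto (fun r : ℝ => sphereIntegral fun ω => f (x + r • ω)) atTop (𝓝 0) := by
  rw [← Metric.cobounded_eq_cocompact, Metric.tendsto_nhds] at hf0
  refine Metric.tendsto_nhds.2 fun ε hε => ?_
  obtain ⟨R, -, hR⟩ := hasBasis_cobounded_norm.eventually_iff.1
    (hf0 (ε / (4 * π)) (by positivity))
  filter_upwards [eventually_ge_atTop (R + ‖x‖), eventually_ge_atTop 0] with r hRr hr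
  have hsmall (ω : E) (hω : ‖ω‖ = 1) : |f (x + r • ω)| < ε / (4 * π) := by
    have hnorm : r - ‖x‖ ≤ ‖x + r • ω‖ := by
      simpa [norm_smul, hω, abs_of_nonneg hr, add_comm] using norm_sub_norm_le (r • ω) (-x)
    simpa using hR (x := x + r • ω) (show R ≤ ‖x + r • ω‖ by linarith)
  simpa [mul_div_cancel₀, pi_ne_zero] using abs_sphereIntegral_lt (by fun_prop) hsmall

lemma sphereIntegral_eq_zero_of_hasDerivAt {f : E → ℝ} {P P' Q Q' : ℝ → ℝ → ℝ}
    (hP : ∀ φ θ, HasDerivAt (fun φ => P φ θ) (P' φ θ) φ)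
    (hQ : ∀ φ θ, HasDerivAt (Q φ) (Q' φ θ) θ)
    (hP' : Continuous fun p : ℝ × ℝ => P' p.1 p.2) (hQ' : Continuous fun p : ℝ × ℝ => Q' p.1 p.2)
    (hPzero : ∀ θ, P 0 θ = 0) (hPpi : ∀ θ, P π θ = 0) (hQper : ∀ φ, Q φ (2 * π) = Q φ 0)
    (hf : ∀ φ θ, sin φ * f (spherePoint φ θ) = P' φ θ + Q' φ θ) : sphereIntegral f = 0 := by
  have hPint (θ : ℝ) : ∫ φ in (0 : ℝ)..π, P' φ θ = 0 := by
    rw [intervalIntegral.integral_eq_sub_of_hasDerivAt (fun φ _ => hP φ θ)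
      (Continuous.intervalIntegrable (by fun_prop) _ _), hPzero, hPpi, sub_zero]
  have hQint (φ : ℝ) : ∫ θ in (0 : ℝ)..2 * π, Q' φ θ = 0 := by
    rw [intervalIntegral.integral_eq_sub_of_hasDerivAt (fun θ _ => hQ φ θ)
      (Continuous.intervalIntegrable (by fun_prop) _ _), hQper, sub_self]
  have hinner (φ : ℝ) : ∫ θ in (0 : ℝ)..2 * π, sin φ * f (spherePoint φ θ) =
      ∫ θ in (0 : ℝ)..2 * π, P' φ θ := by
    simp only [hf]
    rw [intervalIntegral.integral_add (Continuous.intervalIntegrable (by fun_prop) _ _)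
      (Continuous.intervalIntegrable (by fun_prop) _ _), hQint, add_zero]
  have hintegrable : IntegrableOn (Function.uncurry P') (uIoc 0 π ×ˢ uIoc 0 (2 * π)) :=
    (hP'.continuousOn.integrableOn_compact (isCompact_uIcc.prod isCompact_uIcc)).mono_set
      (prod_mono uIoc_subset_uIcc uIoc_subset_uIcc)
  simp only [sphereIntegral, hinner]
  rw [intervalIntegral_intervalIntegral_swap hintegrable]
  simp only [hPint, intervalIntegral.integral_zero]

/-- The integrand is the divergence on the unit sphere of the tangential part of the gradient of
`f`, evaluated at `x + r • ω`. -/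
lemma sphereIntegral_darboux {f : E → ℝ} (hf : ContDiff ℝ 2 f) (x : E) (r : ℝ) :
    sphereIntegral (fun ω => r * (lap3 f (x + r • ω) - fderiv ℝ (fderiv ℝ f) (x + r • ω) ω ω) -
      2 * fderiv ℝ f (x + r • ω) ω) = 0 := by
  have := hf.continuous_fderiv two_ne_zero
  have := continuous_fderiv_fderiv hf
  refine sphereIntegral_eq_zero_of_hasDerivAt
    (P := fun φ θ => sin φ * fderiv ℝ f (x + r • spherePoint φ θ) (meridianTangent φ θ))
    (Q := fun φ θ => fderiv ℝ f (x + r • spherePoint φ θ) (latitudeTangent θ))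
    (fun φ θ => (hasDerivAt_sin φ).mul (hasDerivAt_fderiv_apply hf
      (((hasDerivAt_spherePoint_left φ θ).const_smul r).const_add x)
      (hasDerivAt_meridianTangent_left φ θ)))
    (fun φ θ => hasDerivAt_fderiv_apply hf
      (((hasDerivAt_spherePoint_right φ θ).const_smul r).const_add x)
      (hasDerivAt_latitudeTangent φ θ))
    (by fun_prop) (by fun_prop) (by simp) (by simp) (by simp [spherePoint, latitudeTangent])
    fun φ θ => ?_
  rw [lap3_eq_sum_fderiv_fderiv hf, ← bilin_spherePoint_add_tangents _ φ θ]
  simp only [map_smul, map_neg, map_add, smul_apply, smul_eq_mul]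
  ring

end SphereIntegral

section WaveEquation

lemma sphereIntegral_light_cone {U : ℝ × E → ℝ} (hU : ContDiff ℝ 2 U)
    (hwave : ∀ t x, iteratedDeriv 2 (fun τ => U (τ, x)) t = lap3 (fun y => U (t, y)) x)
    (x : E) (t s : ℝ) :
    sphereIntegral (fun ω =>
      U (s, x + (t - s) • ω) + (t - s) * fderiv ℝ U (s, x + (t - s) • ω) (1, ω)) =
      4 * π * U (t, x) := by
  have := hU.continuous_fderiv two_ne_zero
  have := continuous_fderiv_fderiv hU
  let G (s : ℝ) : ℝ := sphereIntegral fun ω =>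
    U (s, x + (t - s) • ω) + (t - s) • fderiv ℝ U (s, x + (t - s) • ω) (1, ω)
  have hG (s : ℝ) : HasDerivAt G 0 s := by
    have hslice : ContDiff ℝ 2 fun y => U (s, y) := hU.comp (contDiff_prodMk_right s)
    refine (hasDerivAt_sphereIntegral (by fun_prop) (by fun_prop)
      (fun s ω => hasDerivAt_along_light_cone hU x ω t s) s).congr_deriv ?_
    simpa [fderiv_slice (hU.differentiable two_ne_zero), fderiv_fderiv_slice hU, ← hwave,
      iteratedDeriv_two_slice hU] using sphereIntegral_darboux hslice x (t - s)
  calc G s = G t := is_const_of_deriv_eq_zero (fun s => (hG s).differentiableAt)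
        (fun s => (hG s).deriv) s t
    _ = 4 * π * U (t, x) := by simp [G, sphereIntegral_const]

/-- `4 * π` times the right-hand side of Kirchhoff's formula at time `t` for the data `(f, g)`,
with the radius `r` of the sphere of integration kept independent of `t`. Kirchhoff's formula is
the case `r = t`. -/
noncomputable def kirchhoffIntegral (f g : E → ℝ) (x : E) (r t : ℝ) : ℝ :=
  sphereIntegral fun ω => f (x + r • ω) + r * fderiv ℝ f (x + r • ω) ω + t * g (x + r • ω)

lemma kirchhoff_formula {u : ℝ → E → ℝ} (hu : ContDiff ℝ 2 fun p : ℝ × E => u p.1 p.2)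
    (hwave : ∀ t x, iteratedDeriv 2 (fun τ => u τ x) t = lap3 (u t) x) (t : ℝ) (x : E) :
    4 * π * u t x = kirchhoffIntegral (u 0) (fun y => deriv (fun τ => u τ y) 0) x t t := by
  have hdiff := hu.differentiable two_ne_zero
  refine (sphereIntegral_light_cone hu hwave x t 0).symm.trans
    (congrArg sphereIntegral (funext fun ω => ?_))
  have htime (y : E) : deriv (fun τ => u τ y) 0 =
      fderiv ℝ (fun p : ℝ × E => u p.1 p.2) (0, y) (1, 0) := deriv_slice hdiff 0 y
  have hspace (y : E) : fderiv ℝ (u 0) y ω =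
      fderiv ℝ (fun p : ℝ × E => u p.1 p.2) (0, y) (0, ω) := by
    simpa using DFunLike.congr_fun (fderiv_slice hdiff 0 y) ω
  have hsplit : ((1, ω) : ℝ × E) = (1, 0) + (0, ω) := by simp
  simp only [htime, hspace, hsplit, map_add, sub_zero]
  ring

lemma kirchhoffIntegral_neg (f g : E → ℝ) (x : E) (r t : ℝ) :
    kirchhoffIntegral f g x (-r) t = kirchhoffIntegral f g x r t := by
  simpa [kirchhoffIntegral] using sphereIntegral_comp_neg
    fun ω => f (x + r • ω) + r * fderiv ℝ f (x + r • ω) ω + t * g (x + r • ω)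

lemma kirchhoffIntegral_abs (f g : E → ℝ) (x : E) (r t : ℝ) :
    kirchhoffIntegral f g x |r| t = kirchhoffIntegral f g x r t := by
  rcases abs_choice r with h | h <;> simp only [h, kirchhoffIntegral_neg]

variable {f g : E → ℝ}

lemma hasDerivAt_kirchhoffIntegral (hf : ContDiff ℝ 2 f) (hg : ContDiff ℝ 1 g) (x : E) (r t : ℝ) :
    HasDerivAt (fun r => kirchhoffIntegral f g x r t)
      (sphereIntegral fun ω => r * lap3 f (x + r • ω) + t * fderiv ℝ g (x + r • ω) ω) r := by
  have := hf.continuous_fderiv two_ne_zero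
  have := continuous_fderiv_fderiv hf
  have := continuous_lap3 hf
  have := hg.continuous_fderiv one_ne_zero
  refine (hasDerivAt_sphereIntegral (by fun_prop) (by fun_prop) (fun r ω =>
    ((hasDerivAt_comp_add_smul (hf.differentiable two_ne_zero) x ω r).fun_add
      ((hasDerivAt_id' r).fun_mul
        (hasDerivAt_fderiv_apply hf (hasDerivAt_add_smul x ω r) (hasDerivAt_const r ω)))).fun_add
      ((hasDerivAt_comp_add_smul (hg.differentiable one_ne_zero) x ω r).const_mul t))
    r).congr_deriv ?_
  rw [← add_zero (sphereIntegral _), ← sphereIntegral_darboux hf x r,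
    ← sphereIntegral_add (by fun_prop) (by fun_prop)]
  congr! 2 with ω
  simp only [map_zero]
  ring

lemma kirchhoffIntegral_strictAntiOn (hf : ContDiff ℝ 2 f) (hg : ContDiff ℝ 1 g)
    (hfg : ∀ x, ‖gradient g x‖ < -lap3 f x) (x : E) (t : ℝ) :
    StrictAntiOn (fun r => kirchhoffIntegral f g x r t) (Ici |t|) := by
  have := continuous_lap3 hf
  have := hg.continuous_fderiv one_ne_zero
  refine strictAntiOn_of_deriv_neg (convex_Ici _)
    (fun r _ => (hasDerivAt_kirchhoffIntegral hf hg x r t).continuousAt.continuousWithinAt)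
    fun r hr => ?_
  rw [interior_Ici, mem_Ioi] at hr
  have hr0 : 0 < r := (abs_nonneg t).trans_lt hr
  rw [(hasDerivAt_kirchhoffIntegral hf hg x r t).deriv, ← neg_pos, neg_eq_neg_one_mul,
    ← sphereIntegral_const_mul]
  refine sphereIntegral_pos (by fun_prop) fun ω hω => ?_
  have hgrad : |fderiv ℝ g (x + r • ω) ω| ≤ ‖gradient g (x + r • ω)‖ := by
    simpa [gradient, hω] using (fderiv ℝ g (x + r • ω)).le_opNorm ω
  have hbound : t * fderiv ℝ g (x + r • ω) ω < r * -lap3 f (x + r • ω) :=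
    calc t * fderiv ℝ g (x + r • ω) ω ≤ |t| * |fderiv ℝ g (x + r • ω) ω| := by
          rw [← abs_mul]
          exact le_abs_self _
      _ ≤ r * ‖gradient g (x + r • ω)‖ := by gcongr
      _ < r * -lap3 f (x + r • ω) := by
          gcongr
          exact hfg _
  linarith

lemma frequently_lt_kirchhoffIntegral (hf : ContDiff ℝ 1 f) (hg : Continuous g)
    (hf0 : Tendsto f (cocompact E) (𝓝 0)) (hg0 : Tendsto g (cocompact E) (𝓝 0)) (x : E) (t : ℝ)
    {c : ℝ} (hc : c < 0) : ∃ᶠ r in atTop, c < kirchhoffIntegral f g x r t := by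
  have hmean (r : ℝ) : HasDerivAt (fun r => sphereIntegral fun ω => f (x + r • ω))
      (sphereIntegral fun ω => fderiv ℝ f (x + r • ω) ω) r :=
    hasDerivAt_sphereIntegral (by fun_prop) (by fun_prop)
      (fun r ω => hasDerivAt_comp_add_smul (hf.differentiable one_ne_zero) x ω r) r
  have hfreq := frequently_lt_add_mul_deriv hmean
    (tendsto_sphereIntegral_add_smul hf.continuous hf0 x) (by linarith : c / 2 < 0)
  have hvelocity : ∀ᶠ r : ℝ in atTop, c / 2 < t * sphereIntegral fun ω => g (x + r • ω) :=
    ((tendsto_sphereIntegral_add_smul hg hg0 x).const_mul t).eventually_const_lt (by linarith)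
  refine (hfreq.and_eventually hvelocity).mono fun r hr => ?_
  rw [kirchhoffIntegral, sphereIntegral_add (by fun_prop) (by fun_prop),
    sphereIntegral_add (by fun_prop) (by fun_prop), sphereIntegral_const_mul,
    sphereIntegral_const_mul]
  linarith [hr.1, hr.2]

lemma kirchhoffIntegral_abs_pos (hf : ContDiff ℝ 2 f) (hg : ContDiff ℝ 1 g)
    (hf0 : Tendsto f (cocompact E) (𝓝 0)) (hg0 : Tendsto g (cocompact E) (𝓝 0))
    (hfg : ∀ x, ‖gradient g x‖ < -lap3 f x) (x : E) (t : ℝ) :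
    0 < kirchhoffIntegral f g x |t| t := by
  have hanti := kirchhoffIntegral_strictAntiOn hf hg hfg x t
  have hnext : |t| + 1 ∈ Ici |t| := (lt_add_one |t|).le
  refine lt_of_le_of_lt ?_ (hanti self_mem_Ici hnext (lt_add_one |t|))
  by_contra! hneg
  obtain ⟨r, hcr, hr⟩ := ((frequently_lt_kirchhoffIntegral (hf.of_le one_le_two) hg.continuous
    hf0 hg0 x t hneg).and_eventually (eventually_ge_atTop (|t| + 1))).exists
  exact hcr.not_ge (hanti.antitoneOn hnext (hnext.trans hr) hr)

theorem wave_positive_nonradial_laplacian_general {u : ℝ → E → ℝ} {u₀ u₁ : E → ℝ}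
    (hu : ContDiff ℝ 2 fun p : ℝ × E => u p.1 p.2)
    (hwave : ∀ t x, iteratedDeriv 2 (fun τ => u τ x) t = lap3 (u t) x)
    (h0 : ∀ x, u 0 x = u₀ x) (h1 : ∀ x, deriv (fun τ => u τ x) 0 = u₁ x)
    (hdecay0 : Tendsto u₀ (cocompact E) (𝓝 0)) (hdecay1 : Tendsto u₁ (cocompact E) (𝓝 0))
    (hpos : ∀ x, ‖gradient u₁ x‖ < -lap3 u₀ x) (t : ℝ) (x : E) : 0 < u t x := by
  obtain rfl : u 0 = u₀ := funext h0
  obtain rfl : (fun y => deriv (fun τ => u τ y) 0) = u₁ := funext h1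
  have hu₀ : ContDiff ℝ 2 (u 0) := hu.comp (contDiff_prodMk_right 0)
  have hu₁ : ContDiff ℝ 1 fun y => deriv (fun τ => u τ y) 0 := by
    simp only [deriv_slice (hu.differentiable two_ne_zero)]
    exact ((hu.fderiv_right (m := 1) le_rfl).comp (contDiff_prodMk_right 0)).clm_apply
      contDiff_const
  have hK := kirchhoffIntegral_abs_pos hu₀ hu₁ hdecay0 hdecay1 hpos x t
  rw [kirchhoffIntegral_abs, ← kirchhoff_formula hu hwave] at hK
  exact pos_of_mul_pos_right hK (by positivity)

end WaveEquation

end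

/-- if the data decay at infinity together with their derivatives and
`-Δu₀ > |∇u₁|` everywhere, then the solution of the free wave equation on ℝ³⁺¹
is everywhere positive. -/
theorem wave_positive_nonradial_laplacian
    (u : ℝ → EuclideanSpace ℝ (Fin 3) → ℝ)
    (u₀ u₁ : EuclideanSpace ℝ (Fin 3) → ℝ)
    (hsmooth : ContDiff ℝ (⊤ : ℕ∞) (fun p : ℝ × EuclideanSpace ℝ (Fin 3) => u p.1 p.2))
    (hwave : ∀ (t : ℝ) (x : EuclideanSpace ℝ (Fin 3)),
      iteratedDeriv 2 (fun τ => u τ x) t = lap3 (u t) x)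
    (h0 : ∀ x, u 0 x = u₀ x)
    (h1 : ∀ x, deriv (fun τ => u τ x) 0 = u₁ x)
    (hdecay0 : ∀ n : ℕ,
      Tendsto (fun x => ‖iteratedFDeriv ℝ n u₀ x‖) (cocompact (EuclideanSpace ℝ (Fin 3))) (nhds 0))
    (hdecay1 : ∀ n : ℕ,
      Tendsto (fun x => ‖iteratedFDeriv ℝ n u₁ x‖) (cocompact (EuclideanSpace ℝ (Fin 3))) (nhds 0))
    (hpos : ∀ x, ‖gradient u₁ x‖ < -(lap3 u₀ x)) :
    ∀ (t : ℝ) (x : EuclideanSpace ℝ (Fin 3)), 0 < u t x :=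
  wave_positive_nonradial_laplacian_general (hsmooth.of_le (WithTop.coe_le_coe.2 le_top))
    hwave h0 h1 (tendsto_zero_iff_norm_tendsto_zero.2 (by simpa using hdecay0 0))
    (tendsto_zero_iff_norm_tendsto_zero.2 (by simpa using hdecay1 0)) hpos
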